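/- Let m be a (local or global) minimum of G of type k and strength λ, and suppose ν has a finite second moment. Then for μ-almost every realization h and every α with 1 − 1/(2(2k−1)) < α < 1 there exists δ > 0 such that for all sufficiently large n, n^{2k(1−α)} ( G_n^h(m + s n^{α−1}) − G_n^h(m) ) ≥ P_{2k}(s) for all s ∈ [−δ n^{1−α}, δ n^{1−α}], where P_{2k}(s) = (λ/(2·(2k)!)) s^{2k} − Σ_{i=1}^{2k−1} |s|^i. -/

import Mathlib

open MeasureTheory ProbabilityTheory Real Filter Topology
open scoped ENNReal NNReal

noncomputable section

/-- The value of a spin encoded as a Boolean. -/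
def spin (b : Bool) : ℝ := if b then 1 else -1

/-- Total magnetization of a configuration. -/
def mag {n : ℕ} (σ : Fin n → Bool) : ℝ := ∑ i, spin (σ i)

/-- Gibbs weight of a configuration in the random field Curie-Weiss model. -/
def gibbsWeight (β : ℝ) (h : ℕ → ℝ) (n : ℕ) (σ : Fin n → Bool) : ℝ :=
  Real.exp (β / (2 * n) * (mag σ) ^ 2 + β * ∑ i : Fin n, h i * spin (σ i))

/-- The random field Curie-Weiss Gibbs measure on configurations. -/
def gibbsMeasure (β : ℝ) (h : ℕ → ℝ) (n : ℕ) : Measure (Fin n → Bool) :=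
  (ENNReal.ofReal (∑ σ : Fin n → Bool, gibbsWeight β h n σ))⁻¹ •
    ∑ σ : Fin n → Bool, ENNReal.ofReal (gibbsWeight β h n σ) • Measure.dirac σ

/-- `μ` is the infinite product of `ν` over `ℕ` (characterised by finite marginals). -/
def IsProductMeasure (ν : Measure ℝ) (μ : Measure (ℕ → ℝ)) : Prop :=
  ∀ n : ℕ, μ.map (fun h (i : Fin n) => h (i : ℕ)) = Measure.pi fun _ : Fin n => ν

/-- extended logarithm, `elog 0 = ⊥`, `elog ⊤ = ⊤`. -/
def elog (x : ℝ≥0∞) : EReal :=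
  if x = 0 then ⊥ else if x = ⊤ then ⊤ else ((Real.log x.toReal : ℝ) : EReal)

/-- A sequence of measures satisfies a large deviations principle with given speed and
rate function. -/
def HasLDP (P : ℕ → Measure ℝ) (speed : ℕ → ℝ) (I : ℝ → ℝ≥0∞) : Prop :=
  LowerSemicontinuous I ∧ (∀ c : ℝ, IsCompact {x : ℝ | I x ≤ ENNReal.ofReal c}) ∧
    ∀ C : Set ℝ, MeasurableSet C →
      -(⨅ x ∈ interior C, (I x : EReal)) ≤
          liminf (fun n => ((((speed n)⁻¹ : ℝ) : EReal)) * elog (P n C)) atTop ∧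
        limsup (fun n => ((((speed n)⁻¹ : ℝ) : EReal)) * elog (P n C)) atTop ≤
          -(⨅ x ∈ closure C, (I x : EReal))

/-- The function `G` of the random field Curie-Weiss model. -/
def G (β : ℝ) (ν : Measure ℝ) (x : ℝ) : ℝ :=
  β / 2 * x ^ 2 - ∫ h, Real.log (Real.cosh (β * (x + h))) ∂ν

/-- The finite-volume function `G_n^h`. -/
def Gn (β : ℝ) (h : ℕ → ℝ) (n : ℕ) (x : ℝ) : ℝ :=
  β / 2 * x ^ 2 - (1 / n) * ∑ i : Fin n, Real.log (Real.cosh (β * (x + h i)))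

/-- `m` is a (local or global) minimum of `G` of type `k` and strength `l`. -/
def IsMinOfType (β : ℝ) (ν : Measure ℝ) (m : ℝ) (k : ℕ) (l : ℝ) : Prop :=
  1 ≤ k ∧ 0 < l ∧ (∀ i : ℕ, 1 ≤ i → i ≤ 2 * k - 1 → iteratedDeriv i (G β ν) m = 0) ∧
    iteratedDeriv (2 * k) (G β ν) m = l

/-- The height of a minimum `m` of `G`. -/
def height (β : ℝ) (ν : Measure ℝ) (m : ℝ) : ℝ := G β ν m - ⨅ w, G β ν w

/-- The broadness of a minimum `m` of `G`. -/
def broadness (β : ℝ) (ν : Measure ℝ) (m : ℝ) : ℝ :=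
  sInf ((fun y => |y - m|) '' {y | G β ν y < G β ν m})

/-- The moderate deviations rate function. -/
def mdpRate (β l : ℝ) (k : ℕ) (x : ℝ) : ℝ≥0∞ :=
  if k = 1 then ENNReal.ofReal (x ^ 2 / (2 * (l⁻¹ - β⁻¹)))
  else ENNReal.ofReal (l * x ^ (2 * k) / (Nat.factorial (2 * k)))

/-- The polynomial `P_{2k}`. -/
def P2k (l : ℝ) (k : ℕ) (s : ℝ) : ℝ :=
  l / (2 * (Nat.factorial (2 * k))) * s ^ (2 * k) - ∑ i ∈ Finset.Icc 1 (2 * k - 1), |s| ^ i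

/-! All derivatives of `ln cosh` of order at least one are bounded, being polynomials in `tanh`. The
derivative `(G_n^h)^(i)(m)` is therefore a deterministic term plus an empirical mean of bounded
i.i.d. variables, and by the sub-Gaussian tail bound and Borel–Cantelli, almost surely
`n^γ ((G_n^h)^(i)(m) - G^(i)(m)) → 0` for all `γ < 1/2` and `i ≥ 1`.

Expand `G_n^h` around `m` by Taylor–Lagrange to order `2k` and put `a = n^(1-α)`. For `1 ≤ i < 2k`
the `i`-th rescaled term is `a^(2k-i) (G_n^h)^(i)(m) s^i / i!`. Since `G^(i)(m) = 0` and the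
restriction on `α` says exactly that `a^(2k-i) = n^γ` with `γ < 1/2` for each such `i`, this term is
eventually at most `|s|^i` in absolute value. The derivative of order `2k` tends to `λ` at `m`, and
derivatives of order `2k + 1` are bounded uniformly in `n` and `h`, so it stays above `λ/2` on a
fixed neighbourhood `|y - m| ≤ δ`.
-/

section Analysis

lemma exists_taylor_lagrange {f : ℝ → ℝ} {n : ℕ} (hn : n ≠ 0) (hf : ContDiff ℝ n f) (x u : ℝ) :
    ∃ ξ, |ξ - x| ≤ |u| ∧ f (x + u) - f x =
      ∑ i ∈ Finset.Icc 1 (n - 1), iteratedDeriv i f x / i.factorial * u ^ i +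
        iteratedDeriv n f ξ / n.factorial * u ^ n := by
  obtain ⟨n, rfl⟩ := Nat.exists_eq_succ_of_ne_zero hn
  rcases eq_or_ne u 0 with rfl | hu
  · refine ⟨x, by simp, ?_⟩
    have hsum : ∑ i ∈ Finset.Icc 1 n, iteratedDeriv i f x / i.factorial * 0 ^ i = 0 :=
      Finset.sum_eq_zero fun i hi => by
        rw [zero_pow (Nat.one_le_iff_ne_zero.mp (Finset.mem_Icc.mp hi).1), mul_zero]
    simp [hsum]
  have hx : x ≠ x + u := by simpa using hu
  obtain ⟨ξ, hξ, hrem⟩ :=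
    taylor_mean_remainder_lagrange_iteratedDeriv hx (by exact_mod_cast hf.contDiffOn)
  have hderiv : ∀ i ∈ Finset.range (n + 1),
      iteratedDerivWithin i f (Set.uIcc x (x + u)) x = iteratedDeriv i f x := fun i hi =>
    iteratedDerivWithin_eq_iteratedDeriv (uniqueDiffOn_uIcc hx)
      (hf.of_le (by exact_mod_cast (Finset.mem_range.mp hi).le)).contDiffAt Set.left_mem_uIcc
  refine ⟨ξ, ?_, ?_⟩
  · simpa using Set.abs_sub_left_of_mem_uIcc (Set.uIoo_subset_uIcc_self hξ)
  rw [taylor_within_apply, Finset.sum_congr rfl fun i hi => by rw [hderiv i hi],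
    Finset.sum_range_eq_add_Ico _ n.succ_pos, sub_eq_iff_eq_add] at hrem
  simp only [add_sub_cancel_left, smul_eq_mul, iteratedDeriv_zero, pow_zero, Nat.factorial_zero,
    Nat.cast_one, inv_one, one_mul] at hrem
  have hsum : ∑ i ∈ Finset.Ico 1 n.succ, (i.factorial : ℝ)⁻¹ * u ^ i * iteratedDeriv i f x =
      ∑ i ∈ Finset.Icc 1 n, iteratedDeriv i f x / i.factorial * u ^ i :=
    Finset.sum_congr rfl fun i _ => by ring
  rw [hrem, hsum]
  simp only [Nat.succ_eq_add_one, Nat.add_sub_cancel]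
  ring

lemma sub_mul_abs_sub_le_of_abs_deriv_le {f : ℝ → ℝ} {C : ℝ} (hf : Differentiable ℝ f)
    (hC : ∀ x, |deriv f x| ≤ C) (x y : ℝ) : f x - C * |y - x| ≤ f y := by
  have h := convex_univ.norm_image_sub_le_of_norm_deriv_le (fun z _ => hf z) (fun z _ => hC z)
    (Set.mem_univ x) (Set.mem_univ y)
  rw [norm_eq_abs, norm_eq_abs] at h
  linarith [(abs_le.mp h).1]

end Analysis

section HyperbolicTangent

lemma hasDerivAt_tanh (x : ℝ) : HasDerivAt tanh (1 - tanh x ^ 2) x := by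
  have hc := (cosh_pos x).ne'
  rw [funext tanh_eq_sinh_div_cosh]
  refine ((hasDerivAt_sinh x).div (hasDerivAt_cosh x) hc).congr_deriv ?_
  field_simp

lemma exists_iteratedDeriv_tanh_eq_eval (n : ℕ) :
    ∃ p : Polynomial ℝ, iteratedDeriv n tanh = fun x => p.eval (tanh x) := by
  induction n with
  | zero => exact ⟨Polynomial.X, by simp⟩
  | succ n ih =>
    obtain ⟨p, hp⟩ := ih
    refine ⟨p.derivative * (1 - Polynomial.X ^ 2), ?_⟩
    ext x
    rw [iteratedDeriv_succ, hp]
    exact ((p.hasDerivAt (tanh x)).comp x (hasDerivAt_tanh x)).deriv.trans (by simp)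

lemma exists_abs_iteratedDeriv_tanh_le (n : ℕ) : ∃ C, ∀ x, |iteratedDeriv n tanh x| ≤ C := by
  obtain ⟨p, hp⟩ := exists_iteratedDeriv_tanh_eq_eval n
  obtain ⟨C, hC⟩ := isCompact_Icc.exists_bound_of_continuousOn (s := Set.Icc (-1 : ℝ) 1)
    p.continuous.continuousOn
  exact ⟨C, fun x => hp ▸ hC _ (abs_le.mp (abs_tanh_lt_one x).le)⟩

/-- The single-site potential `y ↦ ln cosh (β y)` of the random field Curie-Weiss model. -/
def logCosh (β y : ℝ) : ℝ := log (cosh (β * y))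

lemma contDiff_logCosh (β : ℝ) {n : WithTop ℕ∞} : ContDiff ℝ n (logCosh β) :=
  (contDiff_cosh.comp (contDiff_const.mul contDiff_id)).log fun _ => (cosh_pos _).ne'

lemma iteratedDeriv_succ_logCosh (β : ℝ) (n : ℕ) :
    iteratedDeriv (n + 1) (logCosh β) =
      fun y => β ^ (n + 1) * iteratedDeriv n tanh (β * y) := by
  have hsmooth : ContDiff ℝ (n + 1 : ℕ) fun y => log (cosh y) :=
    contDiff_cosh.log fun _ => (cosh_pos _).ne'
  have hderiv : deriv (fun y => log (cosh y)) = tanh := by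
    rw [← logDeriv_cosh]
    ext y
    exact deriv.log differentiable_cosh.differentiableAt (cosh_pos y).ne'
  rw [← hderiv, ← iteratedDeriv_succ']
  exact iteratedDeriv_comp_const_mul hsmooth β

lemma exists_abs_iteratedDeriv_succ_logCosh_le (β : ℝ) (n : ℕ) :
    ∃ C, ∀ y, |iteratedDeriv (n + 1) (logCosh β) y| ≤ C := by
  obtain ⟨C, hC⟩ := exists_abs_iteratedDeriv_tanh_le n
  refine ⟨|β ^ (n + 1)| * C, fun y => ?_⟩
  rw [iteratedDeriv_succ_logCosh, abs_mul]
  gcongr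
  exact hC _

end HyperbolicTangent

section TranslationAverage

open scoped ContDiff

variable {ν : Measure ℝ} [IsFiniteMeasure ν] {f : ℝ → ℝ}

lemma integrable_comp_const_add_of_abs_deriv_le {C : ℝ} (hf : Differentiable ℝ f)
    (hC : ∀ y, |deriv f y| ≤ C) (hν : Integrable id ν) (x : ℝ) :
    Integrable (fun h => f (x + h)) ν := by
  refine ((integrable_const |f x|).add (hν.abs.const_mul C)).mono'
    (hf.continuous.comp (continuous_const_add x)).aestronglyMeasurable (ae_of_all _ fun h => ?_)
  have hlip : |f (x + h) - f x| ≤ C * |x + h - x| :=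
    convex_univ.norm_image_sub_le_of_norm_deriv_le (fun z _ => hf z) (fun z _ => hC z)
      (Set.mem_univ x) (Set.mem_univ (x + h))
  rw [add_sub_cancel_left] at hlip
  calc ‖f (x + h)‖ ≤ |f x| + |f (x + h) - f x| := by
        linarith [abs_sub_abs_le_abs_sub (f (x + h)) (f x), norm_eq_abs (f (x + h))]
    _ ≤ |f x| + C * |h| := by gcongr

lemma hasDerivAt_integral_comp_add {C : ℝ} (hf : Differentiable ℝ f)
    (hC : ∀ y, |deriv f y| ≤ C) (hν : Integrable id ν) (x : ℝ) :
    HasDerivAt (fun x => ∫ h, f (x + h) ∂ν) (∫ h, deriv f (x + h) ∂ν) x := by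
  have hint := integrable_comp_const_add_of_abs_deriv_le hf hC hν
  exact (hasDerivAt_integral_of_dominated_loc_of_deriv_le (bound := fun _ => C) univ_mem
    (Eventually.of_forall fun y => (hint y).aestronglyMeasurable) (hint x)
    ((measurable_deriv f).comp (measurable_const_add x)).aestronglyMeasurable
    (ae_of_all _ fun h y _ => hC (y + h)) (integrable_const C)
    (ae_of_all _ fun h y _ => (hf (y + h)).hasDerivAt.comp_add_const y h)).2

lemma iteratedDeriv_integral_comp_add (hf : ContDiff ℝ ∞ f)
    (hbdd : ∀ i, ∃ C, ∀ y, |iteratedDeriv (i + 1) f y| ≤ C) (hν : Integrable id ν) (n : ℕ) :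
    iteratedDeriv n (fun x => ∫ h, f (x + h) ∂ν) = fun x => ∫ h, iteratedDeriv n f (x + h) ∂ν := by
  induction n with
  | zero => simp
  | succ n ih =>
    obtain ⟨C, hC⟩ := hbdd n
    rw [iteratedDeriv_succ] at hC
    rw [iteratedDeriv_succ, ih, iteratedDeriv_succ]
    ext x
    exact (hasDerivAt_integral_comp_add
      (hf.differentiable_iteratedDeriv n (by exact_mod_cast ENat.natCast_lt_top n)) hC hν x).deriv

lemma contDiff_integral_comp_add (hf : ContDiff ℝ ∞ f)
    (hbdd : ∀ i, ∃ C, ∀ y, |iteratedDeriv (i + 1) f y| ≤ C) (hν : Integrable id ν) :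
    ContDiff ℝ ∞ fun x => ∫ h, f (x + h) ∂ν := by
  refine contDiff_of_differentiable_iteratedDeriv fun n _ => ?_
  obtain ⟨C, hC⟩ := hbdd n
  rw [iteratedDeriv_succ] at hC
  rw [iteratedDeriv_integral_comp_add hf hbdd hν]
  exact fun x => (hasDerivAt_integral_comp_add
    (hf.differentiable_iteratedDeriv n (by exact_mod_cast ENat.natCast_lt_top n))
    hC hν x).differentiableAt

end TranslationAverage

section Concentration

lemma hasSubgaussianMGF_mono {Ω : Type*} [MeasurableSpace Ω] {μ : Measure Ω} {X : Ω → ℝ}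
    {c d : ℝ≥0} (hX : HasSubgaussianMGF X c μ) (hcd : c ≤ d) : HasSubgaussianMGF X d μ where
  integrable_exp_mul := hX.integrable_exp_mul
  mgf_le t := (hX.mgf_le t).trans (by gcongr)

lemma tendsto_rpow_mul_sqrt_mul_log_div {γ : ℝ} (hγ : γ < 1 / 2) :
    Tendsto (fun n : ℕ => (n : ℝ) ^ γ * (√(n * log n) / n)) atTop (𝓝 0) := by
  have hlog : Tendsto (fun x : ℝ => √(log x / x ^ (1 - 2 * γ))) atTop (𝓝 0) := by
    simpa using (isLittleO_log_rpow_atTop (by linarith)).tendsto_div_nhds_zero.sqrt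
  refine (hlog.comp tendsto_natCast_atTop_atTop).congr' ?_
  filter_upwards [eventually_gt_atTop 0] with n hn
  have hn' : (0 : ℝ) < n := by exact_mod_cast hn
  have hsq : log n / (n : ℝ) ^ (1 - 2 * γ) = ((n : ℝ) ^ γ / n) ^ 2 * (n * log n) := by
    rw [rpow_sub hn', rpow_one, mul_comm 2 γ, rpow_mul hn'.le, rpow_ofNat]
    field_simp
  rw [Function.comp_apply, hsq, sqrt_mul (by positivity), sqrt_sq (by positivity)]
  ring

variable {Ω : Type*} [MeasurableSpace Ω] {μ : Measure Ω} {X : ℕ → Ω → ℝ} {c : ℝ≥0}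

lemma ae_eventually_sum_range_lt (hc : c ≠ 0) (hindep : iIndepFun X μ)
    (hX : ∀ i, HasSubgaussianMGF (X i) c μ) :
    ∀ᵐ ω ∂μ, ∀ᶠ n : ℕ in atTop, ∑ i ∈ Finset.range n, X i ω < 2 * √c * √(n * log n) := by
  have := hindep.isProbabilityMeasure
  have htail (n : ℕ) : μ {ω | 2 * √c * √(n * log n) ≤ ∑ i ∈ Finset.range n, X i ω} ≤
      ENNReal.ofReal (exp (-(2 * √c * √(n * log n)) ^ 2 / (2 * n * c))) := by
    rw [← ofReal_measureReal]
    exact ENNReal.ofReal_le_ofReal <|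
      HasSubgaussianMGF.measure_sum_range_ge_le_of_iIndepFun hindep (fun i _ => hX i)
        (by positivity)
  have hrate : (fun n : ℕ => 1 / (n : ℝ) ^ 2) =ᶠ[atTop]
      fun n : ℕ => exp (-(2 * √c * √(n * log n)) ^ 2 / (2 * n * c)) := by
    filter_upwards [eventually_gt_atTop 0] with n hn
    have hn' : (0 : ℝ) < n := by exact_mod_cast hn
    have hlog : 0 ≤ n * log n := mul_nonneg hn'.le (log_natCast_nonneg n)
    have hexp : -(2 * √c * √(n * log n)) ^ 2 / (2 * n * c) = -(log n * (2 : ℕ)) := by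
      rw [mul_pow, mul_pow, sq_sqrt c.coe_nonneg, sq_sqrt hlog]
      push_cast
      field_simp
    rw [hexp, exp_neg, exp_mul, exp_log hn', rpow_natCast, one_div]
  have hsum := (summable_one_div_nat_pow.mpr one_lt_two).congr_atTop hrate
  filter_upwards [ae_eventually_notMem
    (ne_top_of_le_ne_top hsum.tsum_ofReal_ne_top (ENNReal.tsum_le_tsum htail))] with ω hω
  simpa using hω

lemma ae_tendsto_rpow_mul_average (hindep : iIndepFun X μ)
    (hX : ∀ i, HasSubgaussianMGF (X i) c μ) :
    ∀ᵐ ω ∂μ, ∀ γ < (1 / 2 : ℝ), Tendsto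
      (fun n : ℕ => (n : ℝ) ^ γ * ((∑ i ∈ Finset.range n, X i ω) / n)) atTop (𝓝 0) := by
  have hX' i : HasSubgaussianMGF (X i) (c + 1) μ := hasSubgaussianMGF_mono (hX i) le_self_add
  have hneg : iIndepFun (fun i => -X i) μ := hindep.comp (fun _ x => -x) fun _ => measurable_neg
  filter_upwards [ae_eventually_sum_range_lt (by positivity) hindep hX',
    ae_eventually_sum_range_lt (by positivity) hneg fun i => (hX' i).neg] with ω hlt hgt γ hγ
  have hlim := (tendsto_rpow_mul_sqrt_mul_log_div hγ).const_mul (2 * √((c + 1 : ℝ≥0) : ℝ))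
  rw [mul_zero] at hlim
  refine squeeze_zero_norm' ?_ hlim
  filter_upwards [hlt, hgt] with n hlt hgt
  simp only [Pi.neg_apply, Finset.sum_neg_distrib] at hgt
  have habs : |∑ i ∈ Finset.range n, X i ω| ≤ 2 * √((c + 1 : ℝ≥0) : ℝ) * √(n * log n) :=
    abs_le.mpr ⟨by linarith, hlt.le⟩
  rw [norm_mul, norm_div, norm_natCast, norm_of_nonneg (by positivity), norm_eq_abs,
    mul_left_comm, ← mul_div_assoc (2 * √_)]
  gcongr

lemma ae_tendsto_rpow_mul_average_sub_integral {𝓧 : Type*} [MeasurableSpace 𝓧] {ν : Measure 𝓧}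
    [IsProbabilityMeasure ν] {f : 𝓧 → ℝ} {C : ℝ} (hf : Measurable f) (hC : ∀ x, |f x| ≤ C) :
    ∀ᵐ h ∂Measure.infinitePi fun _ : ℕ => ν, ∀ γ < (1 / 2 : ℝ), Tendsto
      (fun n : ℕ => (n : ℝ) ^ γ * (1 / n * ∑ i : Fin n, f (h i) - ∫ x, f x ∂ν)) atTop (𝓝 0) := by
  have hindep : iIndepFun (fun i (h : ℕ → 𝓧) => f (h i) - ∫ x, f x ∂ν)
      (Measure.infinitePi fun _ : ℕ => ν) :=
    iIndepFun_infinitePi (X := fun _ x => f x - ∫ x, f x ∂ν) fun _ => hf.sub_const _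
  have hsub (i : ℕ) : HasSubgaussianMGF (fun h : ℕ → 𝓧 => f (h i) - ∫ x, f x ∂ν)
      ((‖C - -C‖₊ / 2) ^ 2) (Measure.infinitePi fun _ : ℕ => ν) := by
    have hcoord := measurePreserving_eval_infinitePi (fun _ : ℕ => ν) i
    have hbase : HasSubgaussianMGF (fun x => f x - ∫ x, f x ∂ν) ((‖C - -C‖₊ / 2) ^ 2) ν :=
      hasSubgaussianMGF_of_mem_Icc hf.aemeasurable (ae_of_all _ fun x => abs_le.mp (hC x))
    exact HasSubgaussianMGF.of_map (X := fun x => f x - ∫ x, f x ∂ν) hcoord.aemeasurable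
      (hcoord.map_eq.symm ▸ hbase)
  filter_upwards [ae_tendsto_rpow_mul_average hindep hsub] with h hlim γ hγ
  refine (hlim γ hγ).congr' ?_
  filter_upwards [eventually_gt_atTop 0] with n hn
  have hn' : (n : ℝ) ≠ 0 := by exact_mod_cast hn.ne'
  rw [Finset.sum_sub_distrib, Fin.sum_univ_eq_sum_range fun i => f (h i)]
  simp only [Finset.sum_const, Finset.card_range, nsmul_eq_mul]
  field_simp

end Concentration

section CurieWeiss

variable {β : ℝ} {ν : Measure ℝ} {m : ℝ} {k : ℕ}

lemma IsProductMeasure.eq_infinitePi [IsProbabilityMeasure ν] {μ : Measure (ℕ → ℝ)}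
    (hμ : IsProductMeasure ν μ) : μ = Measure.infinitePi fun _ => ν := by
  refine Measure.eq_infinitePi _ fun s t ht => ?_
  obtain ⟨n, hn⟩ := s.exists_nat_subset_range
  let t' (i : Fin n) : Set ℝ := if (i : ℕ) ∈ s then t i else Set.univ
  have ht' (i : Fin n) : MeasurableSet (t' i) := by
    dsimp only [t']
    split_ifs
    exacts [ht i, MeasurableSet.univ]
  have hpre : (s : Set ℕ).pi t = (fun (h : ℕ → ℝ) (i : Fin n) => h i) ⁻¹' Set.univ.pi t' := by
    ext h
    refine ⟨fun hh i _ => ?_, fun hh i hi => ?_⟩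
    · by_cases hi : (i : ℕ) ∈ s <;> simp [t', hi, hh i]
    · simpa [t', Finset.mem_coe.mp hi] using hh ⟨i, Finset.mem_range.mp (hn hi)⟩ trivial
  rw [hpre, ← Measure.map_apply (by fun_prop) (.univ_pi ht'), hμ n, Measure.pi_pi,
    Fin.prod_univ_eq_prod_range (fun i => ν (if i ∈ s then t i else Set.univ)),
    ← Finset.prod_subset hn fun i _ hi => by simp [hi]]
  exact Finset.prod_congr rfl fun i hi => by rw [if_pos hi]

lemma iteratedDeriv_G [IsFiniteMeasure ν] (hν : Integrable id ν) (i : ℕ) (x : ℝ) :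
    iteratedDeriv i (G β ν) x = iteratedDeriv i (fun x => β / 2 * x ^ 2) x -
      ∫ h, iteratedDeriv i (logCosh β) (x + h) ∂ν := by
  have hbdd := exists_abs_iteratedDeriv_succ_logCosh_le β
  rw [← congrFun (iteratedDeriv_integral_comp_add (contDiff_logCosh β) hbdd hν i) x]
  refine iteratedDeriv_fun_sub (by fun_prop) ?_
  exact ((contDiff_integral_comp_add (contDiff_logCosh β) hbdd hν).of_le
    (by exact_mod_cast le_top)).contDiffAt

lemma contDiff_Gn (h : ℕ → ℝ) (N : ℕ) {n : WithTop ℕ∞} : ContDiff ℝ n (Gn β h N) := by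
  have hterm (i : Fin N) : ContDiff ℝ n fun x => logCosh β (x + h i) :=
    (contDiff_logCosh β).comp (contDiff_id.add contDiff_const)
  exact (contDiff_const.mul (contDiff_id.pow 2)).sub
    (contDiff_const.mul (ContDiff.sum fun i _ => hterm i))

lemma iteratedDeriv_Gn (h : ℕ → ℝ) (n i : ℕ) (x : ℝ) :
    iteratedDeriv i (Gn β h n) x = iteratedDeriv i (fun x => β / 2 * x ^ 2) x -
      1 / n * ∑ j : Fin n, iteratedDeriv i (logCosh β) (x + h j) := by
  have hterm (j : Fin n) : ContDiff ℝ i fun x => logCosh β (x + h j) :=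
    (contDiff_logCosh β).comp (contDiff_id.add contDiff_const)
  have hsum : ContDiff ℝ i fun x => ∑ j : Fin n, logCosh β (x + h j) :=
    ContDiff.sum fun j _ => hterm j
  have hsplit := iteratedDeriv_fun_sub (n := i) (x := x)
    (f := fun x => β / 2 * x ^ 2) (g := fun x => 1 / (n : ℝ) * ∑ j : Fin n, logCosh β (x + h j))
    (by fun_prop) (contDiff_const.mul hsum).contDiffAt
  rw [iteratedDeriv_const_mul_field (1 / (n : ℝ)),
    iteratedDeriv_fun_sum fun j _ => (hterm j).contDiffAt] at hsplit
  simp only [iteratedDeriv_comp_add_const] at hsplit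
  exact hsplit

lemma exists_abs_iteratedDeriv_Gn_le (β : ℝ) {i : ℕ} (hi : 3 ≤ i) :
    ∃ C, ∀ h n x, |iteratedDeriv i (Gn β h n) x| ≤ C := by
  obtain ⟨i, rfl⟩ : ∃ j, i = j + 1 := ⟨i - 1, by omega⟩
  obtain ⟨C, hC⟩ := exists_abs_iteratedDeriv_succ_logCosh_le β i
  refine ⟨C, fun h n x => ?_⟩
  have hquad : iteratedDeriv (i + 1) (fun x => β / 2 * x ^ 2) x = 0 := by
    rw [iteratedDeriv_const_mul_field, iteratedDeriv_pow,
      Nat.descFactorial_eq_zero_iff_lt.mpr (by omega)]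
    simp
  have hsum : |∑ j : Fin n, iteratedDeriv (i + 1) (logCosh β) (x + h j)| ≤ C * n := by
    simpa [mul_comm] using (Finset.abs_sum_le_sum_abs _ Finset.univ).trans
      (Finset.sum_le_sum fun (j : Fin n) _ => hC (x + h j))
  rw [iteratedDeriv_Gn, hquad, zero_sub, abs_neg, one_div_mul_eq_div, abs_div, Nat.abs_cast]
  exact div_le_of_le_mul₀ n.cast_nonneg ((abs_nonneg _).trans (hC 0)) hsum

lemma ae_tendsto_rpow_mul_iteratedDeriv_Gn_sub [IsProbabilityMeasure ν] (hν : Integrable id ν)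
    {μ : Measure (ℕ → ℝ)} (hμ : IsProductMeasure ν μ) (β m : ℝ) :
    ∀ᵐ h ∂μ, ∀ i ≠ 0, ∀ γ < (1 / 2 : ℝ), Tendsto (fun n : ℕ =>
      (n : ℝ) ^ γ * (iteratedDeriv i (Gn β h n) m - iteratedDeriv i (G β ν) m)) atTop (𝓝 0) := by
  simp_rw [hμ.eq_infinitePi, ae_all_iff]
  intro i hi
  obtain ⟨i, rfl⟩ := Nat.exists_eq_succ_of_ne_zero hi
  obtain ⟨C, hC⟩ := exists_abs_iteratedDeriv_succ_logCosh_le β i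
  have hmeas : Measurable fun x => iteratedDeriv (i + 1) (logCosh β) (m + x) :=
    (((contDiff_logCosh β).continuous_iteratedDeriv' (i + 1)).comp
      (continuous_const_add m)).measurable
  filter_upwards [ae_tendsto_rpow_mul_average_sub_integral hmeas fun x => hC (m + x)]
    with h hlim γ hγ
  have hneg := (hlim γ hγ).neg
  rw [neg_zero] at hneg
  refine hneg.congr fun n => ?_
  rw [iteratedDeriv_Gn, iteratedDeriv_G hν]
  ring

lemma neg_abs_pow_le_pow_mul {a d s : ℝ} {i n : ℕ} (ha : 0 < a) (hi : i ≤ n)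
    (hd : a ^ (n - i) * |d| ≤ 1) :
    -|s| ^ i ≤ a ^ n * (d / i.factorial * (s * a⁻¹) ^ i) := by
  refine neg_le_of_abs_le ?_
  have hscale : a ^ n * (d / i.factorial * (s * a⁻¹) ^ i) =
      a ^ (n - i) * d * s ^ i / i.factorial := by
    rw [pow_sub₀ a ha.ne' hi, mul_pow, inv_pow]
    ring
  rw [hscale, abs_div, abs_mul, abs_mul, abs_pow, abs_pow, abs_of_pos ha, Nat.abs_cast]
  calc a ^ (n - i) * |d| * |s| ^ i / i.factorial
      ≤ a ^ (n - i) * |d| * |s| ^ i :=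
        div_le_self (by positivity) (by exact_mod_cast i.factorial_pos)
    _ ≤ |s| ^ i := mul_le_of_le_one_left (by positivity) hd

lemma P2k_le_pow_mul_sub {f : ℝ → ℝ} {l δ a s : ℝ} (hk : k ≠ 0)
    (hf : ContDiff ℝ (2 * k : ℕ) f) (ha : 0 < a)
    (hlow : ∀ i ∈ Finset.Icc 1 (2 * k - 1), a ^ (2 * k - i) * |iteratedDeriv i f m| ≤ 1)
    (htop : ∀ y, |y - m| ≤ δ → l / 2 ≤ iteratedDeriv (2 * k) f y) (hs : |s| ≤ δ * a) :
    P2k l k s ≤ a ^ (2 * k) * (f (m + s * a⁻¹) - f m) := by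
  obtain ⟨ξ, hξ, htaylor⟩ := exists_taylor_lagrange (by omega) hf m (s * a⁻¹)
  have hξδ : |ξ - m| ≤ δ := hξ.trans <| by
    rwa [abs_mul, abs_inv, abs_of_pos ha, ← div_eq_mul_inv, div_le_iff₀ ha]
  have hlead : l / (2 * (2 * k).factorial) * s ^ (2 * k) ≤
      a ^ (2 * k) * (iteratedDeriv (2 * k) f ξ / (2 * k).factorial * (s * a⁻¹) ^ (2 * k)) := by
    have hpow : 0 ≤ s ^ (2 * k) := (even_two_mul k).pow_nonneg s
    calc l / (2 * (2 * k).factorial) * s ^ (2 * k)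
        = l / 2 / (2 * k).factorial * s ^ (2 * k) := by rw [div_div]
      _ ≤ iteratedDeriv (2 * k) f ξ / (2 * k).factorial * s ^ (2 * k) := by
        gcongr
        exact htop ξ hξδ
      _ = _ := by rw [mul_pow, inv_pow]; field_simp
  have hlower : -∑ i ∈ Finset.Icc 1 (2 * k - 1), |s| ^ i ≤ ∑ i ∈ Finset.Icc 1 (2 * k - 1),
      a ^ (2 * k) * (iteratedDeriv i f m / i.factorial * (s * a⁻¹) ^ i) := by
    rw [← Finset.sum_neg_distrib]
    exact Finset.sum_le_sum fun i hi => neg_abs_pow_le_pow_mul ha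
      (by have := Finset.mem_Icc.mp hi; omega) (hlow i hi)
  rw [htaylor, mul_add, Finset.mul_sum, P2k]
  linarith

lemma one_sub_mul_lt_half {α : ℝ} (hk : k ≠ 0) (hα : 1 - 1 / (2 * (2 * (k : ℝ) - 1)) < α)
    {j : ℕ} (hj : j ≤ 2 * k - 1) : (1 - α) * j < 1 / 2 := by
  have hk' : (1 : ℝ) ≤ k := by exact_mod_cast Nat.one_le_iff_ne_zero.mpr hk
  have hj' : (j : ℝ) ≤ 2 * k - 1 := by
    have : j + 1 ≤ 2 * k := by omega
    have : (j : ℝ) + 1 ≤ 2 * k := by exact_mod_cast this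
    linarith
  rcases le_or_gt 1 α with hα1 | hα1
  · nlinarith [j.cast_nonneg (α := ℝ)]
  have hlt : 1 - α < 1 / (2 * (2 * (k : ℝ) - 1)) := by linarith
  rw [lt_div_iff₀ (by linarith)] at hlt
  nlinarith

lemma eventually_pow_mul_abs_iteratedDeriv_Gn_le_one {h : ℕ → ℝ} {α : ℝ}
    (hzero : ∀ i, 1 ≤ i → i ≤ 2 * k - 1 → iteratedDeriv i (G β ν) m = 0)
    (hα : 1 - 1 / (2 * (2 * (k : ℝ) - 1)) < α)
    (hlim : ∀ i ≠ 0, ∀ γ < (1 / 2 : ℝ), Tendsto (fun n : ℕ =>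
      (n : ℝ) ^ γ * (iteratedDeriv i (Gn β h n) m - iteratedDeriv i (G β ν) m)) atTop (𝓝 0)) :
    ∀ᶠ n : ℕ in atTop, ∀ i ∈ Finset.Icc 1 (2 * k - 1),
      ((n : ℝ) ^ (1 - α)) ^ (2 * k - i) * |iteratedDeriv i (Gn β h n) m| ≤ 1 := by
  refine (Finset.eventually_all _).mpr fun i hi => ?_
  obtain ⟨hi1, hi2⟩ := Finset.mem_Icc.mp hi
  have hi_lim := (hlim i (by omega) ((1 - α) * (2 * k - i : ℕ))
    (one_sub_mul_lt_half (by omega) hα (by omega))).abs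
  rw [abs_zero] at hi_lim
  filter_upwards [hi_lim.eventually_le_const one_pos] with n hn
  rw [hzero i hi1 hi2, sub_zero, abs_mul, abs_of_nonneg (by positivity),
    rpow_mul n.cast_nonneg, rpow_natCast] at hn
  exact hn

lemma exists_eventually_half_le_iteratedDeriv_Gn (β m : ℝ) {k : ℕ} (hk : k ≠ 0) {l : ℝ}
    (hl : 0 < l) : ∃ δ > (0 : ℝ), ∀ h : ℕ → ℝ,
      Tendsto (fun n => iteratedDeriv (2 * k) (Gn β h n) m) atTop (𝓝 l) →
        ∀ᶠ n in atTop, ∀ y, |y - m| ≤ δ → l / 2 ≤ iteratedDeriv (2 * k) (Gn β h n) y := by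
  obtain ⟨C, hC⟩ := exists_abs_iteratedDeriv_Gn_le β (i := 2 * k + 1) (by omega)
  have hC0 : 0 ≤ C := (abs_nonneg _).trans (hC 0 0 0)
  refine ⟨l / (4 * (C + 1)), by positivity, fun h hlim => ?_⟩
  filter_upwards [hlim.eventually_const_le (show 3 * l / 4 < l by linarith)] with n hn y hy
  have hnear := sub_mul_abs_sub_le_of_abs_deriv_le
    ((contDiff_Gn h n (n := (2 * k + 1 : ℕ))).differentiable_iteratedDeriv (2 * k)
      (by exact_mod_cast (2 * k).lt_succ_self))
    (by simpa only [iteratedDeriv_succ] using hC h n) m y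
  have hdrop : C * |y - m| ≤ l / 4 :=
    calc C * |y - m| ≤ (C + 1) * (l / (4 * (C + 1))) := by gcongr; linarith
      _ = l / 4 := by field_simp
  linarith

end CurieWeiss

theorem rescaled_increments_lower_bound_general
    (β : ℝ) (ν : Measure ℝ) [IsProbabilityMeasure ν] (hmom : Integrable id ν)
    (μ : Measure (ℕ → ℝ)) (hμ : IsProductMeasure ν μ)
    (m : ℝ) (k : ℕ) (l : ℝ) (hmin : IsMinOfType β ν m k l) :
    ∃ δ > (0 : ℝ), ∀ᵐ h ∂μ, ∀ α : ℝ, 1 - 1 / (2 * (2 * (k : ℝ) - 1)) < α →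
      ∀ᶠ n : ℕ in atTop, ∀ s : ℝ,
        s ∈ Set.Icc (-(δ * (n : ℝ) ^ (1 - α))) (δ * (n : ℝ) ^ (1 - α)) →
          P2k l k s ≤ (n : ℝ) ^ (2 * (k : ℝ) * (1 - α)) *
            (Gn β h n (m + s * (n : ℝ) ^ (α - 1)) - Gn β h n m) := by
  obtain ⟨hk, hl, hzero, hstrength⟩ := hmin
  rw [Nat.one_le_iff_ne_zero] at hk
  obtain ⟨δ, hδ, hcurv⟩ := exists_eventually_half_le_iteratedDeriv_Gn β m hk hl
  refine ⟨δ, hδ, ?_⟩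
  filter_upwards [ae_tendsto_rpow_mul_iteratedDeriv_Gn_sub hmom hμ β m] with h hlim α hα
  have htop : Tendsto (fun n => iteratedDeriv (2 * k) (Gn β h n) m) atTop (𝓝 l) := by
    simpa [tendsto_sub_nhds_zero_iff, hstrength] using hlim (2 * k) (by omega) 0 (by norm_num)
  filter_upwards [eventually_pow_mul_abs_iteratedDeriv_Gn_le_one hzero hα hlim, hcurv h htop,
    eventually_gt_atTop 0] with n hlow hhalf hn s hs
  have hn' : (0 : ℝ) < n := by exact_mod_cast hn
  have hpow : (n : ℝ) ^ (2 * (k : ℝ) * (1 - α)) = ((n : ℝ) ^ (1 - α)) ^ (2 * k) := by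
    rw [← rpow_mul_natCast hn'.le, mul_comm]
    push_cast
    rfl
  have hinv : (n : ℝ) ^ (α - 1) = ((n : ℝ) ^ (1 - α))⁻¹ := by
    rw [← rpow_neg hn'.le, neg_sub]
  rw [hpow, hinv]
  exact P2k_le_pow_mul_sub hk (contDiff_Gn h n) (by positivity) hlow hhalf
    (abs_le.mpr hs)

/-- Polynomial lower bound on the rescaled increments of `G_n^h`
(Lemma 5.4 (ii) of the paper). -/
theorem rescaled_increments_lower_bound
    (β : ℝ) (hβ : 0 < β) (ν : Measure ℝ) [IsProbabilityMeasure ν]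
    (hmom : Integrable (fun x : ℝ => x ^ 2) ν)
    (μ : Measure (ℕ → ℝ)) [IsProbabilityMeasure μ] (hμ : IsProductMeasure ν μ)
    (m : ℝ) (k : ℕ) (l : ℝ) (hmin : IsMinOfType β ν m k l) :
    ∀ᵐ h ∂μ, ∀ α : ℝ, 1 - 1 / (2 * (2 * (k : ℝ) - 1)) < α → α < 1 →
      ∃ δ > (0 : ℝ), ∀ᶠ n : ℕ in atTop, ∀ s : ℝ,
        s ∈ Set.Icc (-(δ * (n : ℝ) ^ (1 - α))) (δ * (n : ℝ) ^ (1 - α)) →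
          P2k l k s ≤ (n : ℝ) ^ (2 * (k : ℝ) * (1 - α)) *
            (Gn β h n (m + s * (n : ℝ) ^ (α - 1)) - Gn β h n m) := by
  obtain ⟨δ, hδ, hbound⟩ := rescaled_increments_lower_bound_general β ν
    (((memLp_two_iff_integrable_sq aestronglyMeasurable_id).mpr hmom).integrable one_le_two)
    μ hμ m k l hmin
  exact hbound.mono fun h hh α hα _ => ⟨δ, hδ, hh α hα⟩
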